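/- Let T > 0 and let b, b̃, σ, σ̃ belong to the class M with σ(x) > 0 and σ̃(x) > 0 for all x. For k = 1, 2, let u_k be a classical solution of the parabolic equation associated with (b, σ, f_k) and ũ_k a classical solution of the parabolic equation associated with (b̃, σ̃, f_k), where f_k(x) = x^k. Suppose there exist ε ∈ (0, T) and a nonempty open set ω ⊂ ℝ such that u_k = ũ_k on (0, ε) × ω for k = 1, 2. Then for every x₀ ∈ ω, one has b(x) = b̃(x) and σ(x) = σ̃(x) for all x ∈ (x₀, +∞). -/

import Mathlib

open Set Filter

/-- A function `ψ : ℝ → ℝ` is piecewise analytic if there exist `δ > 0`, a strictly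
increasing sequence `(κ j)_{j ∈ ℤ}` tending to `-∞` at `-∞` and `+∞` at `+∞` with
`κ (j+1) - κ j > δ`, and functions `φ j` analytic on `[κ j, κ (j+1)]`, such that
`ψ = φ j` on `[κ j, κ (j+1))`. -/
def PiecewiseAnalytic (ψ : ℝ → ℝ) : Prop :=
  ∃ (δ : ℝ) (κ : ℤ → ℝ) (φ : ℤ → ℝ → ℝ),
    0 < δ ∧ StrictMono κ ∧
    Tendsto κ atBot atBot ∧ Tendsto κ atTop atTop ∧
    (∀ j : ℤ, δ < κ (j + 1) - κ j) ∧
    (∀ j : ℤ, AnalyticOn ℝ (φ j) (Icc (κ j) (κ (j + 1)))) ∧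
    (∀ j : ℤ, ∀ x ∈ Ico (κ j) (κ (j + 1)), ψ x = φ j x)

/-- The class `M` of Lipschitz-continuous, piecewise analytic functions on `ℝ`. -/
def ClassM (ψ : ℝ → ℝ) : Prop :=
  (∃ K, LipschitzWith K ψ) ∧ PiecewiseAnalytic ψ

/-- `u : [0,T) × ℝ → ℝ` is a classical solution of
`∂ₜ u = (1/2) σ(x)² ∂ₓₓ u + b(x) ∂ₓ u`, `u(0, ·) = f`:
`u`, `∂ₜ u`, `∂ₓ u`, `∂ₓₓ u` exist and are continuous on `[0,T) × ℝ`, the PDE holds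
there, and the initial condition holds. -/
def IsClassicalSolution (T : ℝ) (b σ f : ℝ → ℝ) (u : ℝ → ℝ → ℝ) : Prop :=
  ContinuousOn (fun p : ℝ × ℝ => u p.1 p.2) (Ico 0 T ×ˢ univ) ∧
  (∀ t ∈ Ico 0 T, ∀ x : ℝ, DifferentiableAt ℝ (fun s => u s x) t) ∧
  (∀ t ∈ Ico 0 T, ∀ x : ℝ, DifferentiableAt ℝ (fun y => u t y) x) ∧
  (∀ t ∈ Ico 0 T, ∀ x : ℝ, DifferentiableAt ℝ (deriv (fun y => u t y)) x) ∧
  ContinuousOn (fun p : ℝ × ℝ => deriv (fun s => u s p.2) p.1) (Ico 0 T ×ˢ univ) ∧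
  ContinuousOn (fun p : ℝ × ℝ => deriv (fun y => u p.1 y) p.2) (Ico 0 T ×ˢ univ) ∧
  ContinuousOn (fun p : ℝ × ℝ => deriv (deriv (fun y => u p.1 y)) p.2) (Ico 0 T ×ˢ univ) ∧
  (∀ t ∈ Ico 0 T, ∀ x : ℝ,
    deriv (fun s => u s x) t =
      (1 / 2) * (σ x) ^ 2 * deriv (deriv (fun y => u t y)) x
        + b x * deriv (fun y => u t y) x) ∧
  (∀ x : ℝ, u 0 x = f x)

/-!
Suppose the gap `(b - bt, (σ² - σt²)/2)` does not vanish identically on `[x₀, ∞)`, and let `x₁` be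
the first point to the right of which it is not locally zero. By one-sided analyticity the gap is
`(x - x₁) ^ m • G x` to the right of `x₁`, with `G x₁ ≠ 0`. The difference `w = u - ut` solves the
equation of `u` with source `(b - bt) ∂ₓut + (σ² - σt²)/2 ∂ₓₓut`. At `t = 0`, `∂ₓut` and `∂ₓₓut` are
`f'` and `f''`. Since the Wronskian of `f₁'` and `f₂'` does not vanish, for one of the two initial
data the leading coefficient `G₁ f' + G₂ f''` of the source is nonzero at `x₁`, so that near
`t = 0` the source is zero up to `x₁` and has a strict sign on `(x₁, c]`. Up to sign, `w` is then
nonnegative on `[x₀, c]` and grows linearly in time at `c`, and a Hopf-type boundary point lemma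
forces `∂ₓw > 0` at `x₀`, whereas the observation gives zero Cauchy data there.
-/

open scoped Topology

lemma deriv_mul_sub_nonneg_of_isMinOn {f : ℝ → ℝ} {x y : ℝ} (hf : DifferentiableAt ℝ f x)
    (hmin : IsMinOn f (segment ℝ x y) x) : 0 ≤ deriv f x * (y - x) := by
  have h := hmin.localize.hasFDerivWithinAt_nonneg hf.hasFDerivAt.hasFDerivWithinAt
    (sub_mem_posTangentConeAt_of_segment_subset subset_rfl)
  rwa [fderiv_eq_smul_deriv, smul_eq_mul, mul_comm] at h

lemma deriv_deriv_nonneg_of_isLocalMin {f : ℝ → ℝ} {x : ℝ} (hmin : IsLocalMin f x)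
    (hf : ContinuousAt f x) : 0 ≤ deriv (deriv f) x := by
  by_contra! hneg
  have hmax : IsLocalMax f x := isLocalMax_of_deriv_deriv_neg hneg hmin.deriv_eq_zero hf
  have hconst : f =ᶠ[𝓝 x] fun _ => f x := by
    filter_upwards [hmin, hmax] with y hy hy' using le_antisymm hy' hy
  have hzero : deriv f =ᶠ[𝓝 x] fun _ => 0 := by simpa using hconst.deriv
  simp [hzero.deriv_eq] at hneg

lemma exists_pos_eventually_mul_le_of_deriv_pos {f : ℝ → ℝ} (h0 : f 0 = 0) (hf : 0 < deriv f 0) :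
    ∃ γ > 0, ∀ᶠ t in 𝓝[≥] 0, γ * t ≤ f t := by
  refine ⟨deriv f 0 / 2, half_pos hf, ?_⟩
  have hderiv : HasDerivWithinAt f (deriv f 0) (Ici 0) 0 :=
    (differentiableAt_of_deriv_ne_zero hf.ne').hasDerivAt.hasDerivWithinAt
  filter_upwards [hderiv.isLittleO.def (half_pos hf), self_mem_nhdsWithin] with t ht ht0
  simp only [sub_zero, h0, smul_eq_mul, Real.norm_eq_abs, abs_of_nonneg (mem_Ici.1 ht0)] at ht
  linarith [(abs_le.1 ht).1]

lemma exists_pos_forall_lt_mul_add {X : Type*} [TopologicalSpace X] {K : Set X} {A B : X → ℝ}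
    (hK : IsCompact K) (hA : ContinuousOn A K) (hB : ContinuousOn B K) (hpos : ∀ x ∈ K, 0 < A x)
    (k : ℝ) : ∃ r > 0, ∀ x ∈ K, k < A x * r + B x := by
  have hquot : ContinuousOn (fun x => (k - B x) / A x) K :=
    (continuousOn_const.sub hB).div hA fun x hx => (hpos x hx).ne'
  obtain ⟨M, hM⟩ := hK.bddAbove_image hquot
  refine ⟨max M 0 + 1, by positivity, fun x hx => ?_⟩
  have hle : (k - B x) / A x < max M 0 + 1 :=
    ((hM (mem_image_of_mem _ hx)).trans (le_max_left M 0)).trans_lt (lt_add_one _)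
  rw [div_lt_iff₀ (hpos x hx)] at hle
  linarith

lemma forall_Ici_of_forall_Ico_imp_eventually {p : ℝ → Prop} {a : ℝ}
    (hp : ∀ c ∈ Ici a, (∀ x ∈ Ico a c, p x) → ∀ᶠ x in 𝓝[≥] c, p x) : ∀ x ∈ Ici a, p x := by
  by_contra! hne
  let S : Set ℝ := {x ∈ Ici a | ¬ p x}
  have hbdd : BddBelow S := ⟨a, fun x hx => hx.1⟩
  have hlt : ∀ x ∈ Ico a (sInf S), p x := fun x hx => by
    by_contra hpx
    exact (csInf_le hbdd ⟨hx.1, hpx⟩).not_gt hx.2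
  have hev := hp (sInf S) (le_csInf hne fun x hx => hx.1) hlt
  obtain ⟨d, hd, hsub⟩ := mem_nhdsGE_iff_exists_Ico_subset.1 hev
  refine (mem_Ioi.1 hd).not_ge (le_csInf hne fun x hx => ?_)
  by_contra! hxd
  exact hx.2 (hsub ⟨csInf_le hbdd hx, hxd⟩)

lemma eventually_eq_zero_or_eq_pow_smul {E : Type*} [NormedAddCommGroup E] [NormedSpace ℝ E]
    [CompleteSpace E] {f : ℝ → E} {x : ℝ} (hf : AnalyticWithinAt ℝ f (Ici x) x) :
    (∀ᶠ y in 𝓝[≥] x, f y = 0) ∨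
      ∃ (m : ℕ) (G : ℝ → E), AnalyticAt ℝ G x ∧ G x ≠ 0 ∧
        ∀ᶠ y in 𝓝[≥] x, f y = (y - x) ^ m • G y := by
  obtain ⟨F, hfF, hF⟩ := analyticWithinAt_iff_exists_analyticAt.1 hf
  rw [insert_eq_of_mem self_mem_Ici] at hfF
  by_cases hzero : ∀ᶠ y in 𝓝 x, F y = 0
  · left
    filter_upwards [hfF, nhdsWithin_le_nhds hzero] with y hy hFy using hy.trans hFy
  · right
    obtain ⟨m, G, hG, hGx, hFG⟩ := hF.exists_eventuallyEq_pow_smul_nonzero_iff.2 hzero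
    refine ⟨m, G, hG, hGx, ?_⟩
    filter_upwards [hfF, nhdsWithin_le_nhds hFG] with y hy hFy using hy.trans hFy

lemma PiecewiseAnalytic.analyticWithinAt_Ici {ψ : ℝ → ℝ} (hψ : PiecewiseAnalytic ψ) (x : ℝ) :
    AnalyticWithinAt ℝ ψ (Ici x) x := by
  obtain ⟨-, κ, φ, -, hκ, hbot, htop, -, hφ, hψφ⟩ := hψ
  obtain ⟨j, hj, hjmax⟩ : ∃ j : ℤ, κ j ≤ x ∧ ∀ i, κ i ≤ x → i ≤ j := by
    obtain ⟨N, hN⟩ := (htop.eventually_gt_atTop x).exists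
    exact Int.exists_greatest_of_bdd ⟨N, fun i hi => (hκ.lt_iff_lt.1 (hi.trans_lt hN)).le⟩
      (hbot.eventually_le_atBot x).exists
  have hx : x < κ (j + 1) := by
    by_contra! hle
    exact absurd (hjmax _ hle) (by lia)
  have hnhds : Ico x (κ (j + 1)) ∈ 𝓝[≥] x := Ico_mem_nhdsGE hx
  have hφx : AnalyticWithinAt ℝ (φ j) (Ici x) x :=
    ((hφ j x ⟨hj, hx.le⟩).mono (Ico_subset_Icc_self.trans (Icc_subset_Icc_left hj)))
      |>.mono_of_mem_nhdsWithin hnhds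
  refine hφx.congr_of_eventuallyEq ?_ (hψφ j x ⟨hj, hx⟩)
  filter_upwards [hnhds] with y hy using hψφ j y ⟨hj.trans hy.1, hy.2⟩

/-- The operator `∂ₜ - A ∂ₓₓ - B ∂ₓ` applied to `u` at `(t, x)`. -/
noncomputable def parabolicOp (A B : ℝ → ℝ) (u : ℝ → ℝ → ℝ) (t x : ℝ) : ℝ :=
  deriv (fun s => u s x) t - A x * deriv (deriv (u t)) x - B x * deriv (u t) x

/-- The regularity over the times in `I` under which the maximum principle applies: joint
continuity and existence of `∂ₜu`, `∂ₓu` and `∂ₓₓu`. Time derivatives are two-sided also at the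
end points of `I`, as in `IsClassicalSolution`. -/
structure IsParabolicRegular (I : Set ℝ) (u : ℝ → ℝ → ℝ) : Prop where
  continuousOn : ContinuousOn (fun p : ℝ × ℝ => u p.1 p.2) (I ×ˢ univ)
  differentiableAt_time : ∀ t ∈ I, ∀ x, DifferentiableAt ℝ (fun s => u s x) t
  differentiable : ∀ t ∈ I, Differentiable ℝ (u t)
  differentiable_deriv : ∀ t ∈ I, Differentiable ℝ (deriv (u t))

section ParabolicOp

variable {A B : ℝ → ℝ} {u v w : ℝ → ℝ → ℝ} {I J : Set ℝ} {a c k r t x γ κ τ : ℝ}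

lemma IsParabolicRegular.mono (hu : IsParabolicRegular J u) (hIJ : I ⊆ J) :
    IsParabolicRegular I u where
  continuousOn := hu.continuousOn.mono (prod_mono_left hIJ)
  differentiableAt_time t ht := hu.differentiableAt_time t (hIJ ht)
  differentiable t ht := hu.differentiable t (hIJ ht)
  differentiable_deriv t ht := hu.differentiable_deriv t (hIJ ht)

lemma IsParabolicRegular.deriv_slice_sub (hu : IsParabolicRegular I u) (hv : IsParabolicRegular I v)
    (ht : t ∈ I) : deriv ((u - v) t) = deriv (u t) - deriv (v t) :=
  funext fun x => deriv_sub (hu.differentiable t ht x) (hv.differentiable t ht x)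

lemma IsParabolicRegular.sub (hu : IsParabolicRegular I u) (hv : IsParabolicRegular I v) :
    IsParabolicRegular I (u - v) where
  continuousOn := hu.continuousOn.sub hv.continuousOn
  differentiableAt_time t ht x :=
    (hu.differentiableAt_time t ht x).sub (hv.differentiableAt_time t ht x)
  differentiable t ht := (hu.differentiable t ht).sub (hv.differentiable t ht)
  differentiable_deriv t ht := by
    rw [hu.deriv_slice_sub hv ht]
    exact (hu.differentiable_deriv t ht).sub (hv.differentiable_deriv t ht)

lemma deriv_const_smul_slice (r : ℝ) (u : ℝ → ℝ → ℝ) (t : ℝ) :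
    deriv ((r • u) t) = r • deriv (u t) :=
  funext fun _ => deriv_const_smul_field r (u t)

lemma IsParabolicRegular.const_smul (hu : IsParabolicRegular I u) (r : ℝ) :
    IsParabolicRegular I (r • u) where
  continuousOn := hu.continuousOn.const_smul r
  differentiableAt_time t ht x := (hu.differentiableAt_time t ht x).const_smul r
  differentiable t ht := (hu.differentiable t ht).const_smul r
  differentiable_deriv t ht := by
    rw [deriv_const_smul_slice]
    exact (hu.differentiable_deriv t ht).const_smul r

lemma parabolicOp_sub (hu : IsParabolicRegular I u) (hv : IsParabolicRegular I v) (ht : t ∈ I) :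
    parabolicOp A B (u - v) t x = parabolicOp A B u t x - parabolicOp A B v t x := by
  have htime : deriv (fun s => (u - v) s x) t =
      deriv (fun s => u s x) t - deriv (fun s => v s x) t :=
    deriv_sub (hu.differentiableAt_time t ht x) (hv.differentiableAt_time t ht x)
  have hspace : deriv (deriv ((u - v) t)) x = deriv (deriv (u t)) x - deriv (deriv (v t)) x := by
    rw [hu.deriv_slice_sub hv ht]
    exact deriv_sub (hu.differentiable_deriv t ht x) (hv.differentiable_deriv t ht x)
  rw [parabolicOp, htime, hspace, hu.deriv_slice_sub hv ht, Pi.sub_apply, parabolicOp, parabolicOp]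
  ring

lemma parabolicOp_const_smul (r : ℝ) (u : ℝ → ℝ → ℝ) :
    parabolicOp A B (r • u) t x = r * parabolicOp A B u t x := by
  have htime : deriv (fun s => (r • u) s x) t = r * deriv (fun s => u s x) t :=
    deriv_const_smul_field r fun s => u s x
  have hspace : deriv (deriv ((r • u) t)) x = r * deriv (deriv (u t)) x := by
    rw [deriv_const_smul_slice]
    exact deriv_const_smul_field r (deriv (u t))
  rw [parabolicOp, htime, hspace, deriv_const_smul_slice, Pi.smul_apply, smul_eq_mul, parabolicOp]
  ring

lemma parabolicOp_nonpos_of_isMinOn (hw : IsParabolicRegular (Icc 0 τ) w)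
    (ht : t ∈ Ioc 0 τ) (hx : x ∈ Ioo a c) (hA : 0 ≤ A x)
    (hmin : ∀ s ∈ Icc 0 τ, ∀ y ∈ Icc a c, w t x ≤ w s y) : parabolicOp A B w t x ≤ 0 := by
  have htI : t ∈ Icc 0 τ := Ioc_subset_Icc_self ht
  have hxmin : IsLocalMin (w t) x := by
    filter_upwards [Icc_mem_nhds hx.1 hx.2] with y hy using hmin t htI y hy
  have hspace : 0 ≤ deriv (deriv (w t)) x :=
    deriv_deriv_nonneg_of_isLocalMin hxmin (hw.differentiable t htI x).continuousAt
  have htime : 0 ≤ deriv (fun s => w s x) t * (0 - t) := by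
    refine deriv_mul_sub_nonneg_of_isMinOn (hw.differentiableAt_time t htI x) fun s hs => ?_
    rw [segment_symm, segment_eq_Icc ht.1.le] at hs
    exact hmin s ⟨hs.1, hs.2.trans ht.2⟩ x (Ioo_subset_Icc_self hx)
  have htime' : deriv (fun s => w s x) t ≤ 0 := by nlinarith [ht.1]
  rw [parabolicOp, hxmin.deriv_eq_zero]
  linarith [mul_nonneg hA hspace]

theorem nonneg_of_parabolicOp_pos (hw : IsParabolicRegular (Icc 0 τ) w)
    (hA : ∀ x ∈ Ioo a c, 0 ≤ A x)
    (hop : ∀ t ∈ Ioc 0 τ, ∀ x ∈ Ioo a c, 0 < parabolicOp A B w t x)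
    (h0 : ∀ x ∈ Icc a c, 0 ≤ w 0 x) (ha : ∀ t ∈ Icc 0 τ, 0 ≤ w t a)
    (hc : ∀ t ∈ Icc 0 τ, 0 ≤ w t c) : ∀ t ∈ Icc 0 τ, ∀ x ∈ Icc a c, 0 ≤ w t x := by
  by_contra! ⟨t₁, ht₁, x₁, hx₁, hneg₁⟩
  obtain ⟨⟨t, x⟩, ⟨ht, hx⟩, hmin⟩ := (isCompact_Icc.prod isCompact_Icc).exists_isMinOn
    ⟨(t₁, x₁), ht₁, hx₁⟩ (hw.continuousOn.mono (prod_mono_right (subset_univ (Icc a c))))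
  have hle : ∀ s ∈ Icc 0 τ, ∀ y ∈ Icc a c, w t x ≤ w s y := fun s hs y hy =>
    hmin (mk_mem_prod hs hy)
  have hneg : w t x < 0 := (hle t₁ ht₁ x₁ hx₁).trans_lt hneg₁
  have ht' : t ∈ Ioc 0 τ := ⟨ht.1.lt_of_ne (by rintro rfl; exact (h0 x hx).not_gt hneg), ht.2⟩
  have hx' : x ∈ Ioo a c := ⟨hx.1.lt_of_ne (by rintro rfl; exact (ha t ht).not_gt hneg),
    hx.2.lt_of_ne (by rintro rfl; exact (hc t ht).not_gt hneg)⟩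
  exact (hop t ht' x hx').not_ge (parabolicOp_nonpos_of_isMinOn hw ht' hx' (hA x hx') hle)

/-- The travelling exponential front used as a barrier in the boundary point lemma. Its zero moves
to the left with speed `k` and reaches `a` at time `τ`. -/
noncomputable def exponentialFront (κ r k a τ t x : ℝ) : ℝ :=
  κ * (Real.exp (r * (x - a - k * (τ - t))) - 1)

lemma hasDerivAt_exponentialFront_space (κ r k a τ t x : ℝ) :
    HasDerivAt (exponentialFront κ r k a τ t)
      (κ * r * Real.exp (r * (x - a - k * (τ - t)))) x := by
  have h := ((((hasDerivAt_id x).sub_const a).sub_const (k * (τ - t))).const_mul r).exp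
  exact ((h.sub_const 1).const_mul κ).congr_deriv (by simp only [id]; ring)

lemma deriv_exponentialFront_space (κ r k a τ t : ℝ) :
    deriv (exponentialFront κ r k a τ t) =
      fun x => κ * r * Real.exp (r * (x - a - k * (τ - t))) :=
  funext fun x => (hasDerivAt_exponentialFront_space κ r k a τ t x).deriv

lemma isParabolicRegular_exponentialFront (I : Set ℝ) (κ r k a τ : ℝ) :
    IsParabolicRegular I (exponentialFront κ r k a τ) where
  continuousOn := by unfold exponentialFront; fun_prop
  differentiableAt_time t _ x := by unfold exponentialFront; fun_prop
  differentiable t _ x := (hasDerivAt_exponentialFront_space κ r k a τ t x).differentiableAt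
  differentiable_deriv t _ := by rw [deriv_exponentialFront_space]; fun_prop

lemma parabolicOp_exponentialFront :
    parabolicOp A B (exponentialFront κ r k a τ) t x =
      κ * r * Real.exp (r * (x - a - k * (τ - t))) * (k - (A x * r + B x)) := by
  have htime : deriv (fun s => exponentialFront κ r k a τ s x) t =
      κ * r * Real.exp (r * (x - a - k * (τ - t))) * k := by
    have h := (((((hasDerivAt_id t).const_sub τ).const_mul k).const_sub (x - a)).const_mul r).exp
    exact ((h.sub_const 1).const_mul κ).congr_deriv (by simp only [id]; ring) |>.deriv
  have hspace : deriv (deriv (exponentialFront κ r k a τ t)) x =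
      κ * r * Real.exp (r * (x - a - k * (τ - t))) * r := by
    have h := ((((hasDerivAt_id x).sub_const a).sub_const (k * (τ - t))).const_mul r).exp
    rw [deriv_exponentialFront_space]
    exact (h.const_mul (κ * r)).congr_deriv (by simp only [id]; ring) |>.deriv
  rw [parabolicOp, htime, hspace, deriv_exponentialFront_space]
  ring

lemma exponentialFront_nonpos (hκ : 0 ≤ κ) (hr : 0 ≤ r) (hx : x - a ≤ k * (τ - t)) :
    exponentialFront κ r k a τ t x ≤ 0 := by
  refine mul_nonpos_of_nonneg_of_nonpos hκ (sub_nonpos.2 (Real.exp_le_one_iff.2 ?_))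
  exact mul_nonpos_of_nonneg_of_nonpos hr (by linarith)

lemma exp_sub_one_le_mul_exp (y : ℝ) : Real.exp y - 1 ≤ y * Real.exp y := by
  have h := mul_le_mul_of_nonneg_right (Real.one_sub_le_exp_neg y) (Real.exp_nonneg y)
  rw [← Real.exp_add, neg_add_cancel, Real.exp_zero] at h
  linarith

lemma exists_pos_mul_exp_sub_one_le (hγ : 0 < γ) (r τ : ℝ) (hr : 0 < r) :
    ∃ κ > 0, ∀ t ∈ Icc 0 τ, κ * (Real.exp (r * t) - 1) ≤ γ * t := by
  refine ⟨γ / (r * Real.exp (r * τ)), by positivity, fun t ht => ?_⟩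
  have ht0 : 0 ≤ t := ht.1
  calc γ / (r * Real.exp (r * τ)) * (Real.exp (r * t) - 1)
      ≤ γ / (r * Real.exp (r * τ)) * (r * t * Real.exp (r * τ)) := by
        gcongr
        refine (exp_sub_one_le_mul_exp _).trans ?_
        gcongr
        exact ht.2
    _ = γ * t := by field_simp

lemma exists_exp_barrier_le_of_parabolicOp_nonneg (hτ : 0 < τ) (hac : a < c)
    (hw : IsParabolicRegular (Icc 0 τ) w)
    (hA : ContinuousOn A (Icc a c)) (hB : ContinuousOn B (Icc a c)) (hApos : ∀ x ∈ Icc a c, 0 < A x)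
    (hop : ∀ t ∈ Ioc 0 τ, ∀ x ∈ Ioo a c, 0 ≤ parabolicOp A B w t x)
    (h0 : ∀ x ∈ Icc a c, 0 ≤ w 0 x) (ha : ∀ t ∈ Icc 0 τ, 0 ≤ w t a)
    (hγ : 0 < γ) (hc : ∀ t ∈ Icc 0 τ, γ * t ≤ w t c) :
    ∃ κ > 0, ∃ r > 0, ∀ x ∈ Icc a c, κ * (Real.exp (r * (x - a)) - 1) ≤ w τ x := by
  -- With this speed, the zero of the front at time `0` is the right end point `c`.
  obtain ⟨k, hk⟩ : ∃ k, k = (c - a) / τ := ⟨_, rfl⟩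
  have hk0 : 0 < k := hk ▸ div_pos (sub_pos.2 hac) hτ
  have hkτ : k * τ = c - a := by rw [hk]; field_simp
  obtain ⟨r, hr, hkr⟩ := exists_pos_forall_lt_mul_add isCompact_Icc hA hB hApos k
  obtain ⟨κ, hκ, hκγ⟩ := exists_pos_mul_exp_sub_one_le hγ (r * k) τ (by positivity)
  let front := exponentialFront κ r k a τ
  have hfront : IsParabolicRegular (Icc 0 τ) front := isParabolicRegular_exponentialFront ..
  have hfront_op : ∀ t, ∀ x ∈ Ioo a c, parabolicOp A B front t x < 0 := fun t x hx => by
    rw [parabolicOp_exponentialFront]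
    exact mul_neg_of_pos_of_neg (by positivity) (sub_neg.2 (hkr x (Ioo_subset_Icc_self hx)))
  have hfront_c : ∀ t ∈ Icc 0 τ, front t c ≤ γ * t := fun t ht => by
    refine le_of_eq_of_le ?_ (hκγ t ht)
    rw [show front t c = κ * (Real.exp (r * (c - a - k * (τ - t))) - 1) from rfl, ← hkτ]
    ring_nf
  refine ⟨κ, hκ, r, hr, fun x hx => ?_⟩
  suffices 0 ≤ (w - front) τ x by simpa [front, exponentialFront] using this
  refine nonneg_of_parabolicOp_pos (A := A) (B := B) (hw.sub hfront)
    (fun y hy => (hApos y (Ioo_subset_Icc_self hy)).le) (fun t ht y hy => ?_)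
    (fun y hy => sub_nonneg.2 ((exponentialFront_nonpos hκ.le hr.le ?_).trans (h0 y hy)))
    (fun t ht => sub_nonneg.2 ((exponentialFront_nonpos hκ.le hr.le ?_).trans (ha t ht)))
    (fun t ht => sub_nonneg.2 ((hfront_c t ht).trans (hc t ht))) τ ⟨hτ.le, le_rfl⟩ x hx
  · rw [parabolicOp_sub hw hfront (Ioc_subset_Icc_self ht)]
    exact sub_pos.2 ((hfront_op t y hy).trans_le (hop t ht y hy))
  · linarith [hy.2]
  · rw [sub_self]
    exact mul_nonneg hk0.le (sub_nonneg.2 ht.2)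

lemma deriv_pos_of_exp_barrier_le {f : ℝ → ℝ} (hac : a < c) (hκ : 0 < κ) (hr : 0 < r)
    (hf : DifferentiableAt ℝ f a) (hfa : f a = 0)
    (hle : ∀ x ∈ Icc a c, κ * (Real.exp (r * (x - a)) - 1) ≤ f x) : 0 < deriv f a := by
  have hbarrier : HasDerivAt (fun x => κ * (Real.exp (r * (x - a)) - 1)) (κ * r) a :=
    ((((((hasDerivAt_id a).sub_const a).const_mul r).exp.sub_const 1).const_mul κ)).congr_deriv
      (by simp)
  have hdiff := hf.hasDerivAt.sub hbarrier
  have h := deriv_mul_sub_nonneg_of_isMinOn (y := c) hdiff.differentiableAt fun x hx => by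
    rw [segment_eq_Icc hac.le] at hx
    simpa [hfa] using hle x hx
  rw [hdiff.deriv] at h
  exact (mul_pos hκ hr).trans_le (sub_nonneg.1 (nonneg_of_mul_nonneg_left h (sub_pos.2 hac)))

theorem deriv_pos_of_parabolicOp_nonneg (hτ : 0 < τ) (hac : a < c)
    (hw : IsParabolicRegular (Icc 0 τ) w)
    (hA : ContinuousOn A (Icc a c)) (hB : ContinuousOn B (Icc a c)) (hApos : ∀ x ∈ Icc a c, 0 < A x)
    (hop : ∀ t ∈ Ioc 0 τ, ∀ x ∈ Ioo a c, 0 ≤ parabolicOp A B w t x)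
    (h0 : ∀ x ∈ Icc a c, 0 ≤ w 0 x) (ha : ∀ t ∈ Icc 0 τ, 0 ≤ w t a) (haτ : w τ a = 0)
    (hγ : 0 < γ) (hc : ∀ t ∈ Icc 0 τ, γ * t ≤ w t c) : 0 < deriv (w τ) a := by
  obtain ⟨κ, hκ, r, hr, hle⟩ :=
    exists_exp_barrier_le_of_parabolicOp_nonneg hτ hac hw hA hB hApos hop h0 ha hγ hc
  exact deriv_pos_of_exp_barrier_le hac hκ hr (hw.differentiable τ ⟨hτ.le, le_rfl⟩ a) haτ hle

theorem parabolicOp_zero_nonpos_of_cauchyData_eq_zero (hτ : 0 < τ) (hac : a < c)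
    (hw : IsParabolicRegular (Icc 0 τ) w)
    (hA : ContinuousOn A (Icc a c)) (hB : ContinuousOn B (Icc a c)) (hApos : ∀ x ∈ Icc a c, 0 < A x)
    (hop : ∀ t ∈ Ioc 0 τ, ∀ x ∈ Ioo a c, 0 ≤ parabolicOp A B w t x)
    (h0 : w 0 = 0) (ha : ∀ t ∈ Ioc 0 τ, w t a = 0) (ha' : ∀ t ∈ Ioc 0 τ, deriv (w t) a = 0) :
    parabolicOp A B w 0 c ≤ 0 := by
  by_contra! hpos
  have hderiv : 0 < deriv (fun t => w t c) 0 := by simpa [parabolicOp, h0] using hpos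
  obtain ⟨γ, hγ, hev⟩ := exists_pos_eventually_mul_le_of_deriv_pos (congrFun h0 c) hderiv
  obtain ⟨τ', ⟨hτ', hτ'τ⟩, hgrow⟩ : ∃ τ' ∈ Ioc 0 τ, ∀ t ∈ Icc 0 τ', γ * t ≤ w t c := by
    obtain ⟨d, hd, hsub⟩ := nhdsGE_basis_Icc.mem_iff.1 hev
    exact ⟨min d τ, ⟨lt_min hd hτ, min_le_right d τ⟩, fun t ht =>
      hsub ⟨ht.1, ht.2.trans (min_le_left d τ)⟩⟩
  have hτ'I : τ' ∈ Ioc 0 τ := ⟨hτ', hτ'τ⟩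
  refine (deriv_pos_of_parabolicOp_nonneg hτ' hac (hw.mono (Icc_subset_Icc_right hτ'τ)) hA hB hApos
    (fun t ht => hop t (Ioc_subset_Ioc_right hτ'τ ht)) (by simp [h0]) (fun t ht => ?_)
    (ha τ' hτ'I) hγ hgrow).ne' (ha' τ' hτ'I)
  rcases ht.1.eq_or_lt with rfl | ht0
  · simp [h0]
  · exact (ha t ⟨ht0, ht.2.trans hτ'τ⟩).ge

end ParabolicOp

/-- The differences of the drift coefficients and of the diffusion coefficients `σ²/2`. -/
noncomputable def coeffGap (b bt σ σt : ℝ → ℝ) (x : ℝ) : ℝ × ℝ :=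
  (b x - bt x, 1 / 2 * σ x ^ 2 - 1 / 2 * σt x ^ 2)

section ClassicalSolution

variable {T ε x₀ x₁ : ℝ} {b bt σ σt f f₁ f₂ : ℝ → ℝ} {u u₁ u₂ ut ut₁ ut₂ : ℝ → ℝ → ℝ}

lemma eq_and_eq_of_coeffGap_eq_zero {x : ℝ} (hσ : 0 < σ x) (hσt : 0 ≤ σt x)
    (h : coeffGap b bt σ σt x = 0) : b x = bt x ∧ σ x = σt x := by
  obtain ⟨hb, hsq⟩ := Prod.mk_eq_zero.1 h
  exact ⟨sub_eq_zero.1 hb, (sq_eq_sq₀ hσ.le hσt).1 (by linarith)⟩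

lemma analyticWithinAt_coeffGap {s : Set ℝ} {x : ℝ} (hb : AnalyticWithinAt ℝ b s x)
    (hbt : AnalyticWithinAt ℝ bt s x) (hσ : AnalyticWithinAt ℝ σ s x)
    (hσt : AnalyticWithinAt ℝ σt s x) : AnalyticWithinAt ℝ (coeffGap b bt σ σt) s x :=
  (hb.sub hbt).prod
    ((analyticWithinAt_const.mul (hσ.pow 2)).sub (analyticWithinAt_const.mul (hσt.pow 2)))

/-- The source `α ∂ₓv + β ∂ₓₓv` generated in the equation for `u - v` by a gap `(α, β)` between
the coefficients of `u` and `v`. -/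
noncomputable def gapSource (G : ℝ → ℝ × ℝ) (v : ℝ → ℝ → ℝ) (t x : ℝ) : ℝ :=
  (G x).1 * deriv (v t) x + (G x).2 * deriv (deriv (v t)) x

lemma IsClassicalSolution.isParabolicRegular (hu : IsClassicalSolution T b σ f u) :
    IsParabolicRegular (Ico 0 T) u := by
  obtain ⟨hcont, htime, hspace, hspace₂, -⟩ := hu
  exact ⟨hcont, htime, hspace, hspace₂⟩

lemma IsClassicalSolution.zero_eq (hu : IsClassicalSolution T b σ f u) : u 0 = f :=
  funext hu.2.2.2.2.2.2.2.2

lemma IsClassicalSolution.parabolicOp_sub_eq_gapSource (hu : IsClassicalSolution T b σ f u)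
    (hut : IsClassicalSolution T bt σt f ut) {t : ℝ} (ht : t ∈ Ico 0 T) (x : ℝ) :
    parabolicOp (fun x => 1 / 2 * σ x ^ 2) b (u - ut) t x =
      gapSource (coeffGap b bt σ σt) ut t x := by
  rw [parabolicOp_sub hu.isParabolicRegular hut.isParabolicRegular ht]
  obtain ⟨-, -, -, -, -, -, -, heq, -⟩ := hu
  obtain ⟨-, -, -, -, -, -, -, heqt, -⟩ := hut
  simp only [parabolicOp, gapSource, coeffGap, heq t ht x, heqt t ht x]
  ring

lemma IsClassicalSolution.continuousWithinAt_gapSource (hu : IsClassicalSolution T b σ f u)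
    (hT : 0 < T) {G : ℝ → ℝ × ℝ} (hG : ContinuousAt G x₁) :
    ContinuousWithinAt (fun p : ℝ × ℝ => gapSource G u p.1 p.2) (Ici 0 ×ˢ univ) (0, x₁) := by
  obtain ⟨-, -, -, -, -, hderiv, hderiv₂, -, -⟩ := hu
  have hmem : ((0 : ℝ), x₁) ∈ Ico 0 T ×ˢ (univ : Set ℝ) := ⟨⟨le_rfl, hT⟩, mem_univ _⟩
  have hG' : ContinuousAt (fun p : ℝ × ℝ => G p.2) (0, x₁) :=
    ContinuousAt.comp (f := Prod.snd) hG continuousAt_snd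
  refine ContinuousWithinAt.mono_of_mem_nhdsWithin (t := Ico 0 T ×ˢ univ) ?_ ?_
  · exact (hG'.fst.continuousWithinAt.mul (hderiv _ hmem)).add
      (hG'.snd.continuousWithinAt.mul (hderiv₂ _ hmem))
  · rw [nhdsWithin_prod_eq]
    exact prod_mem_prod (Ico_mem_nhdsGE hT) self_mem_nhdsWithin

/-- The lateral Cauchy data of `u` and `ut` at `x₀` agree on the time interval `(0, ε)`. -/
def SameCauchyData (ε x₀ : ℝ) (u ut : ℝ → ℝ → ℝ) : Prop :=
  ∀ t ∈ Ioo 0 ε, u t x₀ = ut t x₀ ∧ deriv (u t) x₀ = deriv (ut t) x₀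

lemma sameCauchyData_of_eqOn_isOpen {ω : Set ℝ} (hω : IsOpen ω) (hx₀ : x₀ ∈ ω)
    (h : ∀ t ∈ Ioo 0 ε, ∀ x ∈ ω, u t x = ut t x) : SameCauchyData ε x₀ u ut := fun t ht =>
  ⟨h t ht x₀ hx₀, (eventuallyEq_of_mem (hω.mem_nhds hx₀) (h t ht)).deriv_eq⟩

lemma IsClassicalSolution.mul_gapSource_zero_nonpos {c τ r : ℝ} (hτ : τ ∈ Ioo 0 ε) (hεT : ε ≤ T)
    (hc : x₀ < c) (hu : IsClassicalSolution T b σ f u) (hut : IsClassicalSolution T bt σt f ut)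
    (hdata : SameCauchyData ε x₀ u ut)
    (hb : ContinuousOn b (Icc x₀ c)) (hσ : ContinuousOn σ (Icc x₀ c))
    (hσ0 : ∀ x ∈ Icc x₀ c, σ x ≠ 0)
    (hsrc : ∀ t ∈ Ioc 0 τ, ∀ x ∈ Ioo x₀ c, 0 ≤ r * gapSource (coeffGap b bt σ σt) ut t x) :
    r * gapSource (coeffGap b bt σ σt) ut 0 c ≤ 0 := by
  have hτT : Icc 0 τ ⊆ Ico 0 T := Icc_subset_Ico_right (hτ.2.trans_le hεT)
  have hop : ∀ t ∈ Icc 0 τ, ∀ x, parabolicOp (fun x => 1 / 2 * σ x ^ 2) b (r • (u - ut)) t x =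
      r * gapSource (coeffGap b bt σ σt) ut t x := fun t ht x => by
    rw [parabolicOp_const_smul, hu.parabolicOp_sub_eq_gapSource hut (hτT ht)]
  have hreg := (hu.isParabolicRegular.sub hut.isParabolicRegular).mono hτT
  rw [← hop 0 ⟨le_rfl, hτ.1.le⟩]
  refine parabolicOp_zero_nonpos_of_cauchyData_eq_zero hτ.1 hc (hreg.const_smul r)
    (continuousOn_const.mul (hσ.pow 2)) hb (fun x hx => ?_) (fun t ht x hx => ?_) ?_
    (fun t ht => ?_) (fun t ht => ?_)
  · have := hσ0 x hx
    positivity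
  · exact (hsrc t ht x hx).trans_eq (hop t (Ioc_subset_Icc_self ht) x).symm
  · simp [hu.zero_eq, hut.zero_eq]
  · simp [(hdata t ⟨ht.1, ht.2.trans_lt hτ.2⟩).1]
  · rw [deriv_const_smul_slice, hu.isParabolicRegular.deriv_slice_sub hut.isParabolicRegular
      (hτT (Ioc_subset_Icc_self ht))]
    simp [(hdata t ⟨ht.1, ht.2.trans_lt hτ.2⟩).2]

theorem IsClassicalSolution.gapSource_zero_eq_zero (hε : ε ∈ Ioo 0 T) (h01 : x₀ ≤ x₁)
    (hu : IsClassicalSolution T b σ f u) (hut : IsClassicalSolution T bt σt f ut)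
    (hdata : SameCauchyData ε x₀ u ut)
    (hb : ContinuousOn b (Ici x₀)) (hσ : ContinuousOn σ (Ici x₀)) (hσ0 : ∀ x ∈ Ici x₀, σ x ≠ 0)
    (hgap : ∀ x ∈ Ico x₀ x₁, coeffGap b bt σ σt x = 0) {m : ℕ} {G : ℝ → ℝ × ℝ}
    (hG : ContinuousAt G x₁)
    (hfactor : ∀ᶠ x in 𝓝[≥] x₁, coeffGap b bt σ σt x = (x - x₁) ^ m • G x) :
    gapSource G ut 0 x₁ = 0 := by
  by_contra hne
  let r := gapSource G ut 0 x₁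
  have hpos : ∀ᶠ p in 𝓝[≥] (0 : ℝ) ×ˢ 𝓝[≥] x₁, 0 < r * gapSource G ut p.1 p.2 := by
    have hlim := ((hut.continuousWithinAt_gapSource (hε.1.trans hε.2) hG).const_mul r).tendsto
    rw [nhdsWithin_prod_eq, nhdsWithin_univ] at hlim
    exact (hlim.eventually_const_lt (mul_self_pos.2 hne)).filter_mono
      (prod_mono_right _ nhdsWithin_le_nhds)
  have hε' : ∀ᶠ t in 𝓝[≥] (0 : ℝ), t < ε := nhdsWithin_le_nhds (eventually_lt_nhds hε.1)
  obtain ⟨⟨τ, c⟩, ⟨hτ, hc⟩, hbox⟩ := (nhdsGE_basis_Icc.prod nhdsGE_basis_Icc).mem_iff.1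
    (hpos.and (hε'.prod_mk hfactor))
  have hsrc : ∀ t ∈ Icc 0 τ, ∀ x ∈ Icc x₁ c, r * gapSource (coeffGap b bt σ σt) ut t x =
      (x - x₁) ^ m * (r * gapSource G ut t x) ∧ 0 < r * gapSource G ut t x := fun t ht x hx => by
    obtain ⟨hGpos, -, hx'⟩ := hbox (mk_mem_prod ht hx)
    refine ⟨?_, hGpos⟩
    simp only [gapSource, hx', Prod.smul_fst, Prod.smul_snd, smul_eq_mul]
    ring
  have hτε : τ < ε := (hbox (mk_mem_prod ⟨hτ.le, le_rfl⟩ ⟨le_rfl, hc.le⟩)).2.1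
  have hle := hu.mul_gapSource_zero_nonpos (r := r) ⟨hτ, hτε⟩ hε.2.le (h01.trans_lt hc) hut hdata
    (hb.mono Icc_subset_Ici_self) (hσ.mono Icc_subset_Ici_self) (fun x hx => hσ0 x hx.1)
    fun t ht x hx => by
      rcases lt_or_ge x x₁ with hx₁ | hx₁
      · simp [gapSource, hgap x ⟨hx.1.le, hx₁⟩]
      · obtain ⟨heq, hGpos⟩ := hsrc t (Ioc_subset_Icc_self ht) x ⟨hx₁, hx.2.le⟩
        exact heq ▸ mul_nonneg (pow_nonneg (sub_nonneg.2 hx₁) m) hGpos.le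
  obtain ⟨heq, hGpos⟩ := hsrc 0 ⟨le_rfl, hτ.le⟩ c ⟨hc.le, le_rfl⟩
  exact (mul_pos (pow_pos (sub_pos.2 hc) m) hGpos).not_ge (heq ▸ hle)

theorem drift_diffusion_uniqueness_rightward_general (hε : ε ∈ Ioo 0 T)
    (hb : ContinuousOn b (Ici x₀)) (hσ : ContinuousOn σ (Ici x₀))
    (hσpos : ∀ x ∈ Ici x₀, 0 < σ x) (hσtnonneg : ∀ x ∈ Ici x₀, 0 ≤ σt x)
    (hb_an : ∀ x ∈ Ici x₀, AnalyticWithinAt ℝ b (Ici x) x)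
    (hbt_an : ∀ x ∈ Ici x₀, AnalyticWithinAt ℝ bt (Ici x) x)
    (hσ_an : ∀ x ∈ Ici x₀, AnalyticWithinAt ℝ σ (Ici x) x)
    (hσt_an : ∀ x ∈ Ici x₀, AnalyticWithinAt ℝ σt (Ici x) x)
    (hu₁ : IsClassicalSolution T b σ f₁ u₁) (hu₂ : IsClassicalSolution T b σ f₂ u₂)
    (hut₁ : IsClassicalSolution T bt σt f₁ ut₁) (hut₂ : IsClassicalSolution T bt σt f₂ ut₂)
    (hwronskian : ∀ x ∈ Ici x₀,
      deriv f₁ x * deriv (deriv f₂) x - deriv f₂ x * deriv (deriv f₁) x ≠ 0)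
    (hdata₁ : SameCauchyData ε x₀ u₁ ut₁) (hdata₂ : SameCauchyData ε x₀ u₂ ut₂) :
    ∀ x ∈ Ici x₀, b x = bt x ∧ σ x = σt x := by
  suffices ∀ x ∈ Ici x₀, coeffGap b bt σ σt x = 0 from fun x hx =>
    eq_and_eq_of_coeffGap_eq_zero (hσpos x hx) (hσtnonneg x hx) (this x hx)
  refine forall_Ici_of_forall_Ico_imp_eventually fun x₁ hx₁ hgap => ?_
  refine (eventually_eq_zero_or_eq_pow_smul (analyticWithinAt_coeffGap (hb_an x₁ hx₁)
    (hbt_an x₁ hx₁) (hσ_an x₁ hx₁) (hσt_an x₁ hx₁))).resolve_right ?_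
  rintro ⟨m, G, hG, hGne, hfactor⟩
  have hσ0 : ∀ x ∈ Ici x₀, σ x ≠ 0 := fun x hx => (hσpos x hx).ne'
  have h₁ := hu₁.gapSource_zero_eq_zero hε hx₁ hut₁ hdata₁ hb hσ hσ0 hgap hG.continuousAt hfactor
  have h₂ := hu₂.gapSource_zero_eq_zero hε hx₁ hut₂ hdata₂ hb hσ hσ0 hgap hG.continuousAt hfactor
  simp only [gapSource, hut₁.zero_eq, hut₂.zero_eq] at h₁ h₂
  refine hGne (Prod.ext (mul_right_cancel₀ (hwronskian x₁ hx₁) ?_)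
    (mul_right_cancel₀ (hwronskian x₁ hx₁) ?_))
  · simp only [Prod.fst_zero]
    linear_combination deriv (deriv f₂) x₁ * h₁ - deriv (deriv f₁) x₁ * h₂
  · simp only [Prod.snd_zero]
    linear_combination deriv f₁ x₁ * h₂ - deriv f₂ x₁ * h₁

end ClassicalSolution

lemma wronskian_deriv_pow_one_pow_two_ne_zero (x : ℝ) :
    deriv (fun x : ℝ => x ^ 1) x * deriv (deriv fun x : ℝ => x ^ 2) x -
      deriv (fun x : ℝ => x ^ 2) x * deriv (deriv fun x : ℝ => x ^ 1) x ≠ 0 := by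
  have h : deriv (fun x : ℝ => x ^ 2) = fun x => 2 * x := by ext; simp
  simp [h]

/-- One-sided (rightward) determination in the proof of Theorem 3: the first- and
second-moment observations determine both coefficients on `(x₀, +∞)` for every `x₀`
in the observation set. -/
theorem drift_diffusion_uniqueness_rightward
    (T : ℝ) (hT : 0 < T)
    (b bt sigma sigmat : ℝ → ℝ)
    (hb : ClassM b) (hbt : ClassM bt)
    (hs : ClassM sigma) (hst : ClassM sigmat)
    (hspos : ∀ x, 0 < sigma x) (hstpos : ∀ x, 0 < sigmat x)
    (u₁ u₂ ut₁ ut₂ : ℝ → ℝ → ℝ)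
    (hu₁ : IsClassicalSolution T b sigma (fun x => x ^ 1) u₁)
    (hu₂ : IsClassicalSolution T b sigma (fun x => x ^ 2) u₂)
    (hut₁ : IsClassicalSolution T bt sigmat (fun x => x ^ 1) ut₁)
    (hut₂ : IsClassicalSolution T bt sigmat (fun x => x ^ 2) ut₂)
    (ε : ℝ) (hε : ε ∈ Ioo 0 T)
    (ω : Set ℝ) (hω : IsOpen ω) (hωne : ω.Nonempty)
    (hobs₁ : ∀ t ∈ Ioo 0 ε, ∀ x ∈ ω, u₁ t x = ut₁ t x)
    (hobs₂ : ∀ t ∈ Ioo 0 ε, ∀ x ∈ ω, u₂ t x = ut₂ t x) :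
    ∀ x₀ ∈ ω, ∀ x ∈ Ioi x₀, b x = bt x ∧ sigma x = sigmat x := by
  intro x₀ hx₀ x hx
  obtain ⟨⟨_, hb_lip⟩, hb_an⟩ := hb
  obtain ⟨⟨_, hs_lip⟩, hs_an⟩ := hs
  exact drift_diffusion_uniqueness_rightward_general hε hb_lip.continuous.continuousOn
    hs_lip.continuous.continuousOn (fun x _ => hspos x) (fun x _ => (hstpos x).le)
    (fun x _ => hb_an.analyticWithinAt_Ici x) (fun x _ => hbt.2.analyticWithinAt_Ici x)
    (fun x _ => hs_an.analyticWithinAt_Ici x) (fun x _ => hst.2.analyticWithinAt_Ici x)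
    hu₁ hu₂ hut₁ hut₂ (fun x _ => wronskian_deriv_pow_one_pow_two_ne_zero x)
    (sameCauchyData_of_eqOn_isOpen hω hx₀ hobs₁) (sameCauchyData_of_eqOn_isOpen hω hx₀ hobs₂)
    x (Ioi_subset_Ici_self hx)
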